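/- Let M_β(x,y) = (1 + ‖x−y‖²)^{−β} be the inverse multiquadric kernel on ℝ^d with parameter β > 0, where ‖·‖ is the Euclidean norm. For distinct positive constants β₁ ≠ β₂, there exists λ ≥ 0 such that λM_{β₂} − M_{β₁} is a positive semidefinite kernel on ℝ^d if and only if d/2 < β₁ < β₂. -/

import Mathlib

open scoped ComplexOrder

/-- A function `K : X × X → ℂ` is a positive semidefinite kernel if every finite
quadratic form `∑ j, ∑ k, c j * conj (c k) * K (x j) (x k)` is a nonnegative real number. -/
def IsPSDKernel {X : Type*} (K : X → X → ℂ) : Prop :=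
  ∀ (n : ℕ) (x : Fin n → X) (c : Fin n → ℂ),
    0 ≤ ∑ j, ∑ k, c j * (starRingEnd ℂ) (c k) * K (x j) (x k)

/-- The inverse multiquadric kernel `M_β(x,y) = (1 + ‖x−y‖²)^{−β}` on `ℝ^d`. -/
noncomputable def invMultiquadricK (d : ℕ) (β : ℝ) (x y : EuclideanSpace ℝ (Fin d)) : ℂ :=
  (((1 + ‖x - y‖ ^ 2) ^ (-β) : ℝ) : ℂ)

/-!
Necessity of `β₁ ≤ β₂`: on equally spaced points of a line with finite-difference weights, letting
the spacing tend to `0`, the quadratic form of `M_β` isolates the `n`-th Taylor coefficient of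
`s ↦ (1 + s) ^ (-β)` at `0`. These coefficients are therefore comparable up to `λ`, so that
`(1 - s) ^ (-β₁) ≤ λ (1 - s) ^ (-β₂)` for `0 ≤ s < 1`, and `s → 1` gives `β₁ ≤ β₂`.

Necessity of `d / 2 < β₁` when `β₁ < β₂`: testing with unit weights on a large cube of lattice
points, `λ M_{β₂}` is at most `M_{β₁} / 2` away from the diagonal, so the double sum of `M_{β₁}` is
`O(n ^ d)`; this bounds the lattice sum of `(1 + ‖m‖²) ^ (-β₁)`, which diverges if `β₁ ≤ d / 2`.

Sufficiency: `M_β` is, up to a factor, the integral of `t ^ (β - 1) exp (-t (1 + ‖x - y‖²))` over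
`t > 0`. By Fourier inversion of the Gaussian, `t ^ (d / 2)` times the quadratic form of
`exp (-t ‖x - y‖²)` is nondecreasing in `t`, so it is nonnegatively correlated with
`t ^ (β₂ - β₁)` under the gamma law of shape `β₁ - d / 2`; this is the domination with
`λ = Γ(β₁ - d / 2) Γ(β₂) / (Γ(β₂ - d / 2) Γ(β₁))`.
-/

open Asymptotics Filter Finset MeasureTheory ProbabilityTheory Topology

/-- The inverse multiquadric profile on a seminormed group; `M_β(x, y)` is its value at `x - y`. -/
noncomputable def invMultiquadric {E : Type*} [SeminormedAddCommGroup E] (β : ℝ) (z : E) : ℝ :=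
  (1 + ‖z‖ ^ 2) ^ (-β)

/-- The inclusion relation under study, on an arbitrary seminormed group `E` in place of `ℝ^d`:
`lam • M_{β₂} - M_{β₁}` is positive semidefinite on `E`. -/
def InvMultiquadricDominates (E : Type*) [SeminormedAddCommGroup E] (lam β₁ β₂ : ℝ) : Prop :=
  IsPSDKernel fun x y : E =>
    ((lam * invMultiquadric β₂ (x - y) - invMultiquadric β₁ (x - y) : ℝ) : ℂ)

section RealKernel

variable {X ι : Type*} {K : X → X → ℝ}

lemma IsPSDKernel.sum_mul_nonneg (hK : IsPSDKernel fun x y => (K x y : ℂ)) (s : Finset ι)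
    (x : ι → X) (c : ι → ℝ) : 0 ≤ ∑ j ∈ s, ∑ k ∈ s, c j * c k * K (x j) (x k) := by
  have h := hK s.card (fun i => x (s.equivFin.symm i)) (fun i => c (s.equivFin.symm i))
  simp only [Complex.conj_ofReal] at h
  norm_cast at h
  refine h.trans_eq ?_
  rw [s.equivFin.symm.sum_comp fun j : s => ∑ k, c j * c (s.equivFin.symm k) *
    K (x j) (x (s.equivFin.symm k)), ← sum_coe_sort s]
  refine sum_congr rfl fun j _ => ?_
  rw [s.equivFin.symm.sum_comp fun k : s => c j * c k * K (x j) (x k),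
    sum_coe_sort s fun k => c j * c k * K (x j) (x k)]

lemma isPSDKernel_ofReal (hsymm : ∀ x y, K x y = K y x)
    (hK : ∀ (n : ℕ) (x : Fin n → X) (c : Fin n → ℝ),
      0 ≤ ∑ j, ∑ k, c j * c k * K (x j) (x k)) :
    IsPSDKernel fun x y => (K x y : ℂ) := by
  intro n x c
  rw [Complex.le_def]
  constructor
  · have hparts := add_nonneg (hK n x fun j => (c j).re) (hK n x fun j => (c j).im)
    simp only [← sum_add_distrib, ← add_mul] at hparts
    simpa [Complex.re_sum] using hparts
  · have him (j k : Fin n) : (c j * (starRingEnd ℂ) (c k) * (K (x j) (x k) : ℂ)).im =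
        (c j).im * (c k).re * K (x j) (x k) - (c k).im * (c j).re * K (x k) (x j) := by
      simp only [Complex.mul_im, Complex.mul_re, Complex.conj_re, Complex.conj_im,
        Complex.ofReal_re, Complex.ofReal_im, hsymm (x k) (x j)]
      ring
    simp only [Complex.im_sum, Complex.zero_im, him, sum_sub_distrib]
    rw [sum_comm, sub_self]

end RealKernel

lemma invMultiquadric_nonneg {E : Type*} [SeminormedAddCommGroup E] (β : ℝ) (z : E) :
    0 ≤ invMultiquadric β z :=
  Real.rpow_nonneg (by positivity) _

lemma ofReal_mul_invMultiquadricK_sub (d : ℕ) (lam β₁ β₂ : ℝ)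
    (x y : EuclideanSpace ℝ (Fin d)) :
    (lam : ℂ) * invMultiquadricK d β₂ x y - invMultiquadricK d β₁ x y =
      ((lam * invMultiquadric β₂ (x - y) - invMultiquadric β₁ (x - y) : ℝ) : ℂ) := by
  simp [invMultiquadricK, invMultiquadric]

lemma InvMultiquadricDominates.sum_le {E ι : Type*} [SeminormedAddCommGroup E] {lam β₁ β₂ : ℝ}
    (h : InvMultiquadricDominates E lam β₁ β₂) (s : Finset ι) (x : ι → E) (c : ι → ℝ) :
    ∑ j ∈ s, ∑ k ∈ s, c j * c k * invMultiquadric β₁ (x j - x k) ≤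
      lam * ∑ j ∈ s, ∑ k ∈ s, c j * c k * invMultiquadric β₂ (x j - x k) := by
  have hsum := h.sum_mul_nonneg s x c
  simp only [mul_sub, sum_sub_distrib, sub_nonneg] at hsum
  simpa only [mul_sum, mul_left_comm lam] using hsum

section FiniteDifferences

/-- The coefficient of the `j`-th shift in the `n`-th iterated forward difference. -/
def fwdDiffCoeff (n j : ℕ) : ℝ := (-1) ^ (n - j) * n.choose j

variable {M : Type*} [AddCommGroup M] (h : M)

lemma fwdDiff_iter_eq_sum_fwdDiffCoeff (f : M → ℝ) (n : ℕ) (y : M) :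
    (fwdDiff h)^[n] f y = ∑ j ∈ range (n + 1), fwdDiffCoeff n j * f (y + j • h) := by
  simp [fwdDiff_iter_eq_sum_shift, fwdDiffCoeff]

lemma fwdDiffCoeff_sub {n j : ℕ} (hj : j ≤ n) :
    fwdDiffCoeff n (n - j) = (-1) ^ n * fwdDiffCoeff n j := by
  have hsign : (-1 : ℝ) ^ n * (-1) ^ (n - j) = (-1) ^ j := by
    rw [← pow_add, show n + (n - j) = j + 2 * (n - j) by omega, pow_add]
    simp
  rw [fwdDiffCoeff, fwdDiffCoeff, Nat.sub_sub_self hj, Nat.choose_symm hj, ← mul_assoc, hsign]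

lemma sum_fwdDiffCoeff_mul_comp_sub (f : M → ℝ) (n : ℕ) (y : M) :
    ∑ k ∈ range (n + 1), fwdDiffCoeff n k * f (y - k • h) =
      (-1) ^ n * (fwdDiff h)^[n] f (y - n • h) := by
  rw [fwdDiff_iter_eq_sum_fwdDiffCoeff, mul_sum, ← sum_range_reflect]
  refine sum_congr rfl fun k hk => ?_
  have hkn : k ≤ n := Nat.lt_succ_iff.1 (mem_range.1 hk)
  rw [Nat.add_sub_cancel, fwdDiffCoeff_sub hkn, mul_assoc, sub_nsmul h hkn]
  congr 3
  abel

lemma sum_fwdDiffCoeff_mul_fwdDiffCoeff (f : M → ℝ) (n : ℕ) :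
    ∑ j ∈ range (n + 1), ∑ k ∈ range (n + 1),
        fwdDiffCoeff n j * fwdDiffCoeff n k * f (j • h - k • h) =
      (-1) ^ n * (fwdDiff h)^[2 * n] f (-(n • h)) := by
  simp only [mul_assoc, ← mul_sum, sum_fwdDiffCoeff_mul_comp_sub]
  rw [two_mul, Function.iterate_add_apply, fwdDiff_iter_eq_sum_fwdDiffCoeff, mul_sum]
  refine sum_congr rfl fun j _ => ?_
  rw [mul_left_comm, neg_add_eq_sub]

lemma fwdDiff_iter_eval_of_natDegree_le {R : Type*} [CommRing R] {P : Polynomial R} {n : ℕ}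
    (hP : P.natDegree ≤ n) (y : R) :
    (fwdDiff 1)^[n] P.eval y = P.coeff n * n.factorial := by
  rcases hP.eq_or_lt with rfl | hlt
  · simp [P.fwdDiff_iter_degree_eq_factorial]
  · simp [Polynomial.fwdDiff_iter_eq_zero_of_degree_lt hlt, P.coeff_eq_zero_of_natDegree_lt hlt]

lemma fwdDiff_iter_eval_mul {R : Type*} [CommRing R] {P : Polynomial R} {n : ℕ}
    (hP : P.natDegree ≤ n) (r y : R) :
    (fwdDiff 1)^[n] (fun t => P.eval (r * t)) y = P.coeff n * n.factorial * r ^ n := by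
  have hdeg : (P.comp (Polynomial.C r * Polynomial.X)).natDegree ≤ n :=
    Polynomial.natDegree_comp_le.trans <|
      (Nat.mul_le_mul hP ((Polynomial.natDegree_C_mul_le r _).trans
        Polynomial.natDegree_X_le)).trans_eq (mul_one n)
  have hdiff := fwdDiff_iter_eval_of_natDegree_le hdeg y
  simp only [Polynomial.comp_C_mul_X_coeff] at hdiff
  calc (fwdDiff 1)^[n] (fun t => P.eval (r * t)) y
      = (fwdDiff 1)^[n] (P.comp (Polynomial.C r * Polynomial.X)).eval y := by
        simp [Polynomial.eval_comp]
    _ = P.coeff n * n.factorial * r ^ n := by rw [hdiff]; ring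

lemma isLittleO_comp_mul_const_pow {g : ℝ → ℝ} {n : ℕ}
    (hg : g =o[𝓝 0] fun t : ℝ => t ^ n) (y : ℝ) :
    (fun r => g (r * y)) =o[𝓝 0] fun r : ℝ => r ^ n := by
  have htend : Tendsto (fun r : ℝ => r * y) (𝓝 0) (𝓝 0) := by
    simpa using (continuous_mul_const y).tendsto 0
  refine (hg.comp_tendsto htend).trans_isBigO ?_
  simpa only [Function.comp_def, mul_pow, mul_comm _ (y ^ n)] using
    isBigO_const_mul_self (y ^ n) (fun r : ℝ => r ^ n) (𝓝 0)

lemma tendsto_fwdDiff_iter_comp_mul_div_pow {f : ℝ → ℝ} {P : Polynomial ℝ} {n : ℕ}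
    (hP : P.natDegree ≤ n) (hf : (fun t => f t - P.eval t) =o[𝓝 0] fun t => t ^ n) (y : ℝ) :
    Tendsto (fun r => (fwdDiff 1)^[n] (fun t => f (r * t)) y / r ^ n) (𝓝[≠] 0)
      (𝓝 (P.coeff n * n.factorial)) := by
  have hrem : (fun r => (fwdDiff 1)^[n] (fun t => f (r * t) - P.eval (r * t)) y)
      =o[𝓝[≠] 0] fun r : ℝ => r ^ n := by
    simp only [fwdDiff_iter_eq_sum_fwdDiffCoeff]
    exact IsLittleO.fun_sum fun j _ =>
      ((isLittleO_comp_mul_const_pow hf _).mono nhdsWithin_le_nhds).const_mul_left _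
  have hlim := hrem.tendsto_div_nhds_zero.add_const (P.coeff n * n.factorial)
  rw [zero_add] at hlim
  refine hlim.congr' ?_
  filter_upwards [self_mem_nhdsWithin] with r hr
  have hsplit : (fwdDiff 1)^[n] (fun t => f (r * t)) y =
      (fwdDiff 1)^[n] (fun t => f (r * t) - P.eval (r * t)) y +
        P.coeff n * n.factorial * r ^ n := by
    rw [← fwdDiff_iter_eval_mul hP, ← Pi.add_apply, ← fwdDiff_iter_add]
    simp [Pi.add_def]
  rw [hsplit, add_div, mul_div_cancel_right₀ _ (pow_ne_zero n hr)]

end FiniteDifferences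

section BinomialSeries

lemma hasSum_choose_mul_pow (a : ℝ) {s : ℝ} (hs : |s| < 1) :
    HasSum (fun n => Ring.choose a n * s ^ n) ((1 + s) ^ a) := by
  have hball : s ∈ Metric.eball (0 : ℝ) 1 := by
    rw [← ENNReal.ofReal_one, Metric.eball_ofReal]
    simpa using hs
  simpa [binomialSeries, mul_comm] using
    (Real.one_add_rpow_hasFPowerSeriesOnBall_zero (a := a)).hasSum hball

lemma isLittleO_one_add_rpow_sub_trunc (a : ℝ) (n : ℕ) :
    (fun s : ℝ => (1 + s) ^ a - ((PowerSeries.binomialSeries ℝ a).trunc (n + 1)).eval s)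
      =o[𝓝 0] fun s => s ^ n := by
  have hO := (Real.one_add_rpow_hasFPowerSeriesAt_zero (a := a)).isBigO_sub_partialSum_pow (n + 1)
  have hpow : (fun s : ℝ => ‖s‖ ^ (n + 1)) =o[𝓝 0] fun s : ℝ => s ^ n := by
    simpa only [norm_pow] using (isLittleO_pow_pow (𝕜 := ℝ) n.lt_succ_self).norm_left
  refine (hO.congr_left fun s => ?_).trans_isLittleO hpow
  simp [FormalMultilinearSeries.partialSum, Polynomial.eval, binomialSeries, mul_comm,
    PowerSeries.eval₂_trunc_eq_sum_range]

end BinomialSeries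

section Order

variable {E : Type*} [NormedAddCommGroup E] [NormedSpace ℝ E] {lam β₁ β₂ : ℝ}

lemma invMultiquadric_smul_of_norm_eq_one (β r : ℝ) {e : E} (he : ‖e‖ = 1) :
    invMultiquadric β (r • e) = (1 + r ^ 2) ^ (-β) := by
  simp [invMultiquadric, norm_smul, he]

/-- The difference `lam • M_{β₂} - M_{β₁}` as a function of the squared distance `s`. -/
noncomputable def dominanceProfile (lam β₁ β₂ s : ℝ) : ℝ :=
  lam * (1 + s) ^ (-β₂) - (1 + s) ^ (-β₁)

/-- The Taylor polynomial of degree `n` of `dominanceProfile lam β₁ β₂` at `0`. -/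
noncomputable def dominanceTaylor (lam β₁ β₂ : ℝ) (n : ℕ) : Polynomial ℝ :=
  Polynomial.C lam * (PowerSeries.binomialSeries ℝ (-β₂)).trunc (n + 1) -
    (PowerSeries.binomialSeries ℝ (-β₁)).trunc (n + 1)

lemma isLittleO_dominanceProfile_sub_dominanceTaylor (lam β₁ β₂ : ℝ) (n : ℕ) :
    (fun s => dominanceProfile lam β₁ β₂ s - (dominanceTaylor lam β₁ β₂ n).eval s)
      =o[𝓝 0] fun s => s ^ n := by
  refine (((isLittleO_one_add_rpow_sub_trunc (-β₂) n).const_mul_left lam).sub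
    (isLittleO_one_add_rpow_sub_trunc (-β₁) n)).congr_left fun s => ?_
  simp only [dominanceProfile, dominanceTaylor, Polynomial.eval_sub, Polynomial.eval_mul,
    Polynomial.eval_C]
  ring

lemma natDegree_dominanceTaylor_le (lam β₁ β₂ : ℝ) (n : ℕ) :
    (dominanceTaylor lam β₁ β₂ n).natDegree ≤ n := by
  refine (Polynomial.natDegree_sub_le _ _).trans (max_le ?_ ?_)
  · exact (Polynomial.natDegree_C_mul_le _ _).trans
      (Nat.lt_succ_iff.1 (PowerSeries.natDegree_trunc_lt _ n))
  · exact Nat.lt_succ_iff.1 (PowerSeries.natDegree_trunc_lt _ n)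

lemma coeff_dominanceTaylor (lam β₁ β₂ : ℝ) (n : ℕ) :
    (dominanceTaylor lam β₁ β₂ n).coeff n = lam * Ring.choose (-β₂) n - Ring.choose (-β₁) n := by
  simp [dominanceTaylor, PowerSeries.coeff_trunc]

lemma InvMultiquadricDominates.fwdDiff_dominanceProfile_nonneg [Nontrivial E]
    (h : InvMultiquadricDominates E lam β₁ β₂) (r : ℝ) (n : ℕ) :
    0 ≤ (-1) ^ n *
      (fwdDiff 1)^[2 * n] (fun t => dominanceProfile lam β₁ β₂ ((r * t) ^ 2)) (-n) := by
  obtain ⟨e, he⟩ := exists_norm_eq E zero_le_one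
  have hsum := h.sum_mul_nonneg (range (n + 1)) (fun j => (r * j) • e) (fwdDiffCoeff n)
  have hdiff := sum_fwdDiffCoeff_mul_fwdDiffCoeff (1 : ℝ)
    (fun t => dominanceProfile lam β₁ β₂ ((r * t) ^ 2)) n
  rw [nsmul_one] at hdiff
  rw [← hdiff]
  refine hsum.trans_eq (sum_congr rfl fun j _ => sum_congr rfl fun k _ => ?_)
  rw [← sub_smul, invMultiquadric_smul_of_norm_eq_one _ _ he,
    invMultiquadric_smul_of_norm_eq_one _ _ he, dominanceProfile, nsmul_one, nsmul_one, mul_sub r]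

-- Finite-difference weights on the points `0, r • e, …, (n * r) • e` annihilate all Taylor
-- coefficients below degree `2 * n`; divide the quadratic form by `r ^ (2 * n)` and let `r → 0`.
lemma InvMultiquadricDominates.choose_le [Nontrivial E]
    (h : InvMultiquadricDominates E lam β₁ β₂) (n : ℕ) :
    (-1) ^ n * Ring.choose (-β₁) n ≤ lam * ((-1) ^ n * Ring.choose (-β₂) n) := by
  have hdeg : ((dominanceTaylor lam β₁ β₂ n).expand ℝ 2).natDegree ≤ 2 * n := by
    rw [Polynomial.natDegree_expand, mul_comm]
    gcongr
    exact natDegree_dominanceTaylor_le lam β₁ β₂ n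
  have htaylor : (fun t => dominanceProfile lam β₁ β₂ (t ^ 2) -
      ((dominanceTaylor lam β₁ β₂ n).expand ℝ 2).eval t) =o[𝓝 0] fun t : ℝ => t ^ (2 * n) := by
    have hsq : Tendsto (fun t : ℝ => t ^ 2) (𝓝 0) (𝓝 0) := by
      simpa using (continuous_pow 2).tendsto (0 : ℝ)
    simpa only [Function.comp_def, Polynomial.expand_eval, pow_mul] using
      (isLittleO_dominanceProfile_sub_dominanceTaylor lam β₁ β₂ n).comp_tendsto hsq
  have hlim := (tendsto_fwdDiff_iter_comp_mul_div_pow hdeg htaylor (-n)).const_mul ((-1) ^ n)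
  have hnonneg := ge_of_tendsto' hlim fun r => by
    rw [← mul_div_assoc]
    exact div_nonneg (h.fwdDiff_dominanceProfile_nonneg r n) ((even_two_mul n).pow_nonneg r)
  rw [Polynomial.coeff_expand_mul' two_pos, coeff_dominanceTaylor, ← mul_assoc] at hnonneg
  have := nonneg_of_mul_nonneg_left hnonneg (by positivity)
  linarith

lemma InvMultiquadricDominates.one_sub_rpow_le [Nontrivial E]
    (h : InvMultiquadricDominates E lam β₁ β₂) {s : ℝ} (hs₀ : 0 ≤ s) (hs₁ : s < 1) :
    (1 - s) ^ (-β₁) ≤ lam * (1 - s) ^ (-β₂) := by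
  have hs : |-s| < 1 := by rwa [abs_neg, abs_of_nonneg hs₀]
  simp only [sub_eq_add_neg]
  refine hasSum_le (fun n => ?_) (hasSum_choose_mul_pow (-β₁) hs)
    ((hasSum_choose_mul_pow (-β₂) hs).mul_left lam)
  calc Ring.choose (-β₁) n * (-s) ^ n
      = (-1) ^ n * Ring.choose (-β₁) n * s ^ n := by rw [neg_pow]; ring
    _ ≤ lam * ((-1) ^ n * Ring.choose (-β₂) n) * s ^ n :=
        mul_le_mul_of_nonneg_right (h.choose_le n) (pow_nonneg hs₀ n)
    _ = lam * (Ring.choose (-β₂) n * (-s) ^ n) := by rw [neg_pow s]; ring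

lemma InvMultiquadricDominates.le [Nontrivial E]
    (h : InvMultiquadricDominates E lam β₁ β₂) : β₁ ≤ β₂ := by
  by_contra! hlt
  have htop : Tendsto (fun r : ℝ => r ^ (β₁ - β₂)) atTop atTop :=
    tendsto_rpow_atTop (sub_pos.2 hlt)
  obtain ⟨r, hr, hlarge⟩ := ((eventually_ge_atTop 1).and (htop.eventually_gt_atTop lam)).exists
  have hr₀ : 0 < r := by linarith
  have hle := h.one_sub_rpow_le (sub_nonneg.2 (inv_le_one_of_one_le₀ hr))
    (sub_lt_self 1 (inv_pos.2 hr₀))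
  rw [sub_sub_cancel, Real.inv_rpow hr₀.le, Real.inv_rpow hr₀.le, Real.rpow_neg hr₀.le,
    Real.rpow_neg hr₀.le, inv_inv, inv_inv] at hle
  rw [Real.rpow_sub hr₀, lt_div_iff₀ (Real.rpow_pos_of_pos hr₀ _)] at hlarge
  exact hle.not_gt hlarge

end Order

section GaussianMonotonicity

variable {V : Type*} [NormedAddCommGroup V] [InnerProductSpace ℝ V]

lemma re_cexp_neg_mul_sq_norm_add (b : ℝ) (w v : V) :
    (Complex.exp (-b * ‖v‖ ^ 2 + Complex.I * inner ℝ w v)).re =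
      Real.exp (-b * ‖v‖ ^ 2) * Real.cos (inner ℝ w v) := by
  rw [Complex.exp_re]
  norm_num [← Complex.ofReal_pow]

lemma integrable_exp_neg_mul_sq_norm_mul_cos [FiniteDimensional ℝ V] [MeasurableSpace V]
    [BorelSpace V] {b : ℝ} (hb : 0 < b) (w : V) :
    Integrable fun v : V => Real.exp (-b * ‖v‖ ^ 2) * Real.cos (inner ℝ w v) := by
  simp only [← re_cexp_neg_mul_sq_norm_add]
  exact (GaussianFourier.integrable_cexp_neg_mul_sq_norm_add (b := b) hb Complex.I w).re

lemma integral_exp_neg_mul_sq_norm_mul_cos [FiniteDimensional ℝ V] [MeasurableSpace V]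
    [BorelSpace V] {b : ℝ} (hb : 0 < b) (w : V) :
    ∫ v : V, Real.exp (-b * ‖v‖ ^ 2) * Real.cos (inner ℝ w v) =
      (Real.pi / b) ^ (Module.finrank ℝ V / 2 : ℝ) * Real.exp (-(‖w‖ ^ 2 / (4 * b))) := by
  have hint := GaussianFourier.integrable_cexp_neg_mul_sq_norm_add (b := b) hb Complex.I w
  have hval := congrArg Complex.re
    (GaussianFourier.integral_cexp_neg_mul_sq_norm_add (b := b) hb Complex.I w)
  simp only [← re_cexp_neg_mul_sq_norm_add]
  refine (integral_re hint).trans (hval.trans ?_)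
  rw [Complex.I_sq, neg_one_mul, neg_div]
  norm_cast
  rw [← Complex.ofReal_ofNat 2]
  norm_cast
  rw [← Complex.ofReal_cpow (by positivity)]
  norm_cast

lemma sum_mul_cos_sub_nonneg {ι : Type*} (s : Finset ι) (c θ : ι → ℝ) :
    0 ≤ ∑ j ∈ s, ∑ k ∈ s, c j * c k * Real.cos (θ j - θ k) := by
  calc 0 ≤ (∑ j ∈ s, c j * Real.cos (θ j)) ^ 2 + (∑ j ∈ s, c j * Real.sin (θ j)) ^ 2 := by
        positivity
    _ = ∑ j ∈ s, ∑ k ∈ s, c j * c k * Real.cos (θ j - θ k) := by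
        simp only [sq, sum_mul_sum, ← sum_add_distrib, Real.cos_sub]
        refine sum_congr rfl fun j _ => sum_congr rfl fun k _ => ?_
        ring

/-- The quadratic form with coefficients `c` of the Gaussian kernel `exp (-t ‖x - y‖²)` on the
points `x`, as a function of `t`. -/
noncomputable def gaussianForm {E ι : Type*} [SeminormedAddCommGroup E] (s : Finset ι)
    (x : ι → E) (c : ι → ℝ) (t : ℝ) : ℝ :=
  ∑ j ∈ s, ∑ k ∈ s, c j * c k * Real.exp (-(‖x j - x k‖ ^ 2 * t))

lemma rpow_mul_gaussianForm_eq_integral [FiniteDimensional ℝ V] [MeasurableSpace V]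
    [BorelSpace V] {ι : Type*} (s : Finset ι) (x : ι → V) (c : ι → ℝ) {t : ℝ} (ht : 0 < t) :
    (Real.pi * (4 * t)) ^ (Module.finrank ℝ V / 2 : ℝ) * gaussianForm s x c t =
      ∫ v : V, Real.exp (-(4 * t)⁻¹ * ‖v‖ ^ 2) *
        ∑ j ∈ s, ∑ k ∈ s, c j * c k * Real.cos (inner ℝ (x j) v - inner ℝ (x k) v) := by
  have hb : 0 < (4 * t)⁻¹ := by positivity
  have hterm (j k : ι) : (fun v : V => Real.exp (-(4 * t)⁻¹ * ‖v‖ ^ 2) *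
      (c j * c k * Real.cos (inner ℝ (x j) v - inner ℝ (x k) v))) = fun v => c j * c k *
        (Real.exp (-(4 * t)⁻¹ * ‖v‖ ^ 2) * Real.cos (inner ℝ (x j - x k) v)) := by
    funext v
    rw [inner_sub_left, mul_left_comm]
  have hint (j k : ι) := (integrable_exp_neg_mul_sq_norm_mul_cos hb (x j - x k)).const_mul
    (c j * c k)
  simp only [gaussianForm, mul_sum]
  rw [integral_finsetSum _ fun j _ => integrable_finsetSum _ fun k _ => by
    rw [hterm]; exact hint j k]
  refine sum_congr rfl fun j _ => ?_
  rw [integral_finsetSum _ fun k _ => by rw [hterm]; exact hint j k]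
  refine sum_congr rfl fun k _ => ?_
  rw [hterm, integral_const_mul, integral_exp_neg_mul_sq_norm_mul_cos hb, div_inv_eq_mul,
    mul_left_comm, show ‖x j - x k‖ ^ 2 / (4 * (4 * t)⁻¹) = ‖x j - x k‖ ^ 2 * t by field_simp]

-- On the Fourier side the normalized form is the integral of a nonnegative function against the
-- unnormalized weight `exp (-‖v‖² / (4 t))`, which increases with `t`.
lemma monotoneOn_rpow_mul_gaussianForm [FiniteDimensional ℝ V] {ι : Type*} (s : Finset ι)
    (x : ι → V) (c : ι → ℝ) :
    MonotoneOn (fun t => t ^ (Module.finrank ℝ V / 2 : ℝ) * gaussianForm s x c t)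
      (Set.Ioi 0) := by
  borelize V
  intro t (ht : 0 < t) u (hu : 0 < u) htu
  have hint {τ : ℝ} (hτ : 0 < τ) : Integrable fun v : V => Real.exp (-(4 * τ)⁻¹ * ‖v‖ ^ 2) *
      ∑ j ∈ s, ∑ k ∈ s, c j * c k * Real.cos (inner ℝ (x j) v - inner ℝ (x k) v) := by
    simp only [mul_sum, ← inner_sub_left, mul_left_comm (Real.exp _)]
    exact integrable_finsetSum _ fun j _ => integrable_finsetSum _ fun k _ =>
      (integrable_exp_neg_mul_sq_norm_mul_cos (by positivity) (x j - x k)).const_mul _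
  have hmono := integral_mono (hint ht) (hint hu) fun v =>
    mul_le_mul_of_nonneg_right
      (Real.exp_le_exp.2 (mul_le_mul_of_nonneg_right (neg_le_neg (by gcongr)) (by positivity)))
      (sum_mul_cos_sub_nonneg s c fun j => inner ℝ (x j) v)
  rw [← rpow_mul_gaussianForm_eq_integral s x c ht,
    ← rpow_mul_gaussianForm_eq_integral s x c hu, ← mul_assoc, ← mul_assoc,
    Real.mul_rpow (by positivity) ht.le, Real.mul_rpow (by positivity) hu.le, mul_assoc,
    mul_assoc] at hmono
  exact le_of_mul_le_mul_left hmono (by positivity)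

end GaussianMonotonicity

section GammaMixture

lemma integral_mul_integral_le_of_monovaryOn {Ω : Type*} [MeasurableSpace Ω] {μ : Measure Ω}
    [IsProbabilityMeasure μ] {f g : Ω → ℝ} {s : Set Ω} (hs : ∀ᵐ t ∂μ, t ∈ s)
    (hfg : MonovaryOn f g s) (hf : Integrable f μ) (hg : Integrable g μ)
    (hfg_int : Integrable (f * g) μ) :
    (∫ t, f t ∂μ) * ∫ t, g t ∂μ ≤ ∫ t, f t * g t ∂μ := by
  have hcross : 0 ≤ ∫ p : Ω × Ω, (f p.1 * g p.1 - f p.1 * g p.2) -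
      (f p.2 * g p.1 - f p.2 * g p.2) ∂μ.prod μ := by
    refine integral_nonneg_of_ae ?_
    filter_upwards [Measure.quasiMeasurePreserving_fst.ae hs,
      Measure.quasiMeasurePreserving_snd.ae hs] with p hp₁ hp₂
    have := monovaryOn_iff_forall_mul_nonneg.1 hfg hp₂ hp₁
    simp only [Pi.zero_apply]
    linarith
  have h₁₁ : Integrable (fun p : Ω × Ω => f p.1 * g p.1) (μ.prod μ) := hfg_int.comp_fst μ
  have h₂₂ : Integrable (fun p : Ω × Ω => f p.2 * g p.2) (μ.prod μ) := hfg_int.comp_snd μ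
  have h₁₂ : Integrable (fun p : Ω × Ω => f p.1 * g p.2) (μ.prod μ) := hf.mul_prod hg
  have h₂₁ : Integrable (fun p : Ω × Ω => f p.2 * g p.1) (μ.prod μ) := by
    simpa only [mul_comm] using hg.mul_prod hf
  rw [integral_sub (by exact h₁₁.sub h₁₂) (by exact h₂₁.sub h₂₂),
    integral_sub h₁₁ h₁₂, integral_sub h₂₁ h₂₂,
    integral_fun_fst (fun t => f t * g t), integral_fun_snd (fun t => f t * g t),
    integral_prod_mul, show ∫ p : Ω × Ω, f p.2 * g p.1 ∂μ.prod μ = (∫ t, g t ∂μ) * ∫ t, f t ∂μ by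
      simpa only [mul_comm] using integral_prod_mul (μ := μ) (ν := μ) g f] at hcross
  simp only [probReal_univ, one_smul] at hcross
  linarith [mul_comm (∫ t, f t ∂μ) (∫ t, g t ∂μ)]

lemma measurable_gammaPDF (a r : ℝ) : Measurable (gammaPDF a r) :=
  (measurable_gammaPDFReal a r).ennreal_ofReal

lemma ae_gammaMeasure_pos (a r : ℝ) : ∀ᵐ t ∂gammaMeasure a r, 0 < t := by
  rw [gammaMeasure, ae_withDensity_iff (measurable_gammaPDF a r)]
  filter_upwards [compl_mem_ae_iff.2 (measure_singleton (0 : ℝ))] with t ht₀ hdensity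
  by_contra! hle
  exact hdensity (gammaPDF_of_neg (hle.lt_of_ne ht₀))

lemma integral_gammaMeasure {a r : ℝ} (ha : 0 < a) (hr : 0 < r) (f : ℝ → ℝ) :
    ∫ t, f t ∂gammaMeasure a r =
      r ^ a / Real.Gamma a * ∫ t in Set.Ioi 0, t ^ (a - 1) * Real.exp (-(r * t)) * f t := by
  rw [gammaMeasure, integral_withDensity_eq_integral_toReal_smul
    (measurable_gammaPDF a r) (ae_of_all _ fun _ => ENNReal.ofReal_lt_top),
    ← integral_const_mul, ← integral_Ici_eq_integral_Ioi, ← integral_indicator measurableSet_Ici]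
  congr with t
  rcases lt_or_ge t 0 with ht | ht
  · simp [gammaPDF_of_neg ht, ht]
  · have : 0 ≤ r ^ a / Real.Gamma a * t ^ (a - 1) * Real.exp (-(r * t)) := by positivity
    simp only [gammaPDF_of_nonneg ht, ENNReal.toReal_ofReal this, smul_eq_mul,
      Set.indicator_of_mem (Set.mem_Ici.2 ht)]
    ring

lemma integral_rpow_mul_exp_gammaMeasure {a σ ρ : ℝ} (ha : 0 < a) (hσ : 0 < a + σ)
    (hρ : 0 ≤ ρ) :
    ∫ t, t ^ σ * Real.exp (-(ρ * t)) ∂gammaMeasure a 1 =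
      Real.Gamma (a + σ) / Real.Gamma a * (1 + ρ) ^ (-(a + σ)) := by
  rw [integral_gammaMeasure ha one_pos, Real.one_rpow,
    setIntegral_congr_fun measurableSet_Ioi (g := fun t => t ^ (a + σ - 1) *
      Real.exp (-((1 + ρ) * t))) fun t (ht : 0 < t) => ?_,
    Real.integral_rpow_mul_exp_neg_mul_Ioi hσ (by positivity), one_div (1 + ρ),
    Real.inv_rpow (by positivity), ← Real.rpow_neg (by positivity)]
  · ring
  · dsimp only
    rw [show a + σ - 1 = a - 1 + σ by ring, Real.rpow_add ht,
      show -((1 + ρ) * t) = -(1 * t) + -(ρ * t) by ring, Real.exp_add]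
    ring

lemma integrable_rpow_mul_exp_gammaMeasure {a σ ρ : ℝ} (ha : 0 < a) (hσ : 0 < a + σ)
    (hρ : 0 ≤ ρ) :
    Integrable (fun t => t ^ σ * Real.exp (-(ρ * t))) (gammaMeasure a 1) := by
  refine Integrable.of_integral_ne_zero ?_
  rw [integral_rpow_mul_exp_gammaMeasure ha hσ hρ]
  positivity

variable {E ι : Type*} [SeminormedAddCommGroup E] {a σ : ℝ}

lemma integrable_rpow_mul_gaussianForm (ha : 0 < a) (hσ : 0 < a + σ) (s : Finset ι)
    (x : ι → E) (c : ι → ℝ) :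
    Integrable (fun t => t ^ σ * gaussianForm s x c t) (gammaMeasure a 1) := by
  simp only [gaussianForm, mul_sum, mul_left_comm (_ ^ σ)]
  exact integrable_finsetSum _ fun j _ => integrable_finsetSum _ fun k _ =>
    (integrable_rpow_mul_exp_gammaMeasure ha hσ (by positivity)).const_mul _

lemma integral_rpow_mul_gaussianForm (ha : 0 < a) (hσ : 0 < a + σ) (s : Finset ι)
    (x : ι → E) (c : ι → ℝ) :
    ∫ t, t ^ σ * gaussianForm s x c t ∂gammaMeasure a 1 =
      Real.Gamma (a + σ) / Real.Gamma a *
        ∑ j ∈ s, ∑ k ∈ s, c j * c k * invMultiquadric (a + σ) (x j - x k) := by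
  have hint (j k : ι) := (integrable_rpow_mul_exp_gammaMeasure ha hσ
    (sq_nonneg ‖x j - x k‖)).const_mul (c j * c k)
  simp only [gaussianForm, mul_sum, mul_left_comm (_ ^ σ)]
  rw [integral_finsetSum _ fun j _ => integrable_finsetSum _ fun k _ => hint j k]
  refine sum_congr rfl fun j _ => ?_
  rw [integral_finsetSum _ fun k _ => hint j k]
  refine sum_congr rfl fun k _ => ?_
  rw [integral_const_mul, integral_rpow_mul_exp_gammaMeasure ha hσ (sq_nonneg _),
    invMultiquadric, mul_left_comm]

end GammaMixture

section Sufficiency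

variable {E : Type*} [NormedAddCommGroup E] [InnerProductSpace ℝ E] [FiniteDimensional ℝ E]
  {β₁ β₂ : ℝ}

-- Chebyshev's inequality for the gamma law of shape `β₁ - d / 2`, applied to the increasing
-- functions `t ^ (β₂ - β₁)` and `t ^ (d / 2) * gaussianForm s x c t`.
lemma Gamma_mul_sum_invMultiquadric_le (hβ₁ : Module.finrank ℝ E / 2 < β₁) (hlt : β₁ < β₂)
    {ι : Type*} (s : Finset ι) (x : ι → E) (c : ι → ℝ) :
    Real.Gamma (β₂ - Module.finrank ℝ E / 2) * (Real.Gamma β₁ *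
        ∑ j ∈ s, ∑ k ∈ s, c j * c k * invMultiquadric β₁ (x j - x k)) ≤
      Real.Gamma (β₁ - Module.finrank ℝ E / 2) * (Real.Gamma β₂ *
        ∑ j ∈ s, ∑ k ∈ s, c j * c k * invMultiquadric β₂ (x j - x k)) := by
  set m : ℝ := Module.finrank ℝ E / 2 with hm
  have hm₀ : 0 ≤ m := by positivity
  have ha : 0 < β₁ - m := sub_pos.2 hβ₁
  have := isProbabilityMeasure_gammaMeasure ha one_pos
  have hprod : (fun t : ℝ => t ^ (β₂ - β₁) * (t ^ m * gaussianForm s x c t))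
      =ᵐ[gammaMeasure (β₁ - m) 1] fun t => t ^ (β₂ - β₁ + m) * gaussianForm s x c t := by
    filter_upwards [ae_gammaMeasure_pos _ _] with t ht
    rw [Real.rpow_add ht, mul_assoc]
  have hchebyshev := integral_mul_integral_le_of_monovaryOn (ae_gammaMeasure_pos (β₁ - m) 1)
    (((Real.monotoneOn_rpow_Ici_of_exponent_nonneg (sub_nonneg.2 hlt.le)).mono
      Set.Ioi_subset_Ici_self).monovaryOn (monotoneOn_rpow_mul_gaussianForm s x c))
    (by simpa using integrable_rpow_mul_exp_gammaMeasure (σ := β₂ - β₁) ha (by linarith) le_rfl)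
    (integrable_rpow_mul_gaussianForm ha (by linarith) s x c)
    ((integrable_congr hprod).2 (integrable_rpow_mul_gaussianForm ha (by linarith) s x c))
  rw [integral_congr_ae hprod, integral_rpow_mul_gaussianForm ha (by linarith),
    integral_rpow_mul_gaussianForm ha (by linarith)] at hchebyshev
  have hmoment := integral_rpow_mul_exp_gammaMeasure (σ := β₂ - β₁) ha (by linarith) le_rfl
  simp only [zero_mul, neg_zero, Real.exp_zero, mul_one, add_zero, Real.one_rpow] at hmoment
  rw [hmoment, sub_add_cancel, show β₁ - m + (β₂ - β₁) = β₂ - m by ring,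
    show β₁ - m + (β₂ - β₁ + m) = β₂ by ring] at hchebyshev
  field_simp at hchebyshev
  linarith

lemma exists_invMultiquadricDominates (hβ₁ : Module.finrank ℝ E / 2 < β₁) (hlt : β₁ < β₂) :
    ∃ lam, 0 ≤ lam ∧ InvMultiquadricDominates E lam β₁ β₂ := by
  have hβ₂ : Module.finrank ℝ E / 2 < β₂ := hβ₁.trans hlt
  have hβ₁₀ : 0 < β₁ := lt_of_le_of_lt (by positivity) hβ₁
  have hβ₂₀ : 0 < β₂ := hβ₁₀.trans hlt
  refine ⟨Real.Gamma (β₁ - Module.finrank ℝ E / 2) * Real.Gamma β₂ /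
    (Real.Gamma (β₂ - Module.finrank ℝ E / 2) * Real.Gamma β₁), by positivity,
    isPSDKernel_ofReal (fun x y => ?_) fun n x c => ?_⟩
  · rw [invMultiquadric, invMultiquadric, invMultiquadric, invMultiquadric, norm_sub_rev]
  · have hle := Gamma_mul_sum_invMultiquadric_le hβ₁ hlt univ x c
    rw [← mul_assoc, ← mul_assoc, ← le_div_iff₀' (by positivity), mul_div_right_comm] at hle
    simpa only [mul_sub, sum_sub_distrib, sub_nonneg, mul_sum, mul_left_comm _ (_ / _)] using hle

end Sufficiency

section LatticePoints

variable {d : ℕ} {lam β₁ β₂ : ℝ}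

/-- The point of `ℝ^d` with natural coordinates `m`. -/
noncomputable def latticePoint (m : Fin d → ℕ) : EuclideanSpace ℝ (Fin d) :=
  WithLp.toLp 2 fun i => (m i : ℝ)

/-- The discrete cube `{0, …, n - 1}^d`. -/
def natCube (d n : ℕ) : Finset (Fin d → ℕ) := Fintype.piFinset fun _ => range n

lemma mem_natCube {n : ℕ} {m : Fin d → ℕ} : m ∈ natCube d n ↔ ∀ i, m i < n := by
  simp [natCube]

lemma card_natCube (d n : ℕ) : #(natCube d n) = n ^ d := by
  simp [natCube]

lemma natCube_subset_natCube {n n' : ℕ} (h : n ≤ n') : natCube d n ⊆ natCube d n' :=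
  fun _ hm => mem_natCube.2 fun i => (mem_natCube.1 hm i).trans_le h

lemma latticePoint_add_sub_latticePoint (j m : Fin d → ℕ) :
    latticePoint (j + m) - latticePoint j = latticePoint m := by
  ext i
  simp [latticePoint]

lemma norm_latticePoint_sq_le {n : ℕ} {m : Fin d → ℕ} (hm : m ∈ natCube d n) :
    ‖latticePoint m‖ ^ 2 ≤ d * (n : ℝ) ^ 2 := by
  rw [EuclideanSpace.norm_sq_eq]
  calc ∑ i, ‖latticePoint m i‖ ^ 2 ≤ ∑ _i : Fin d, (n : ℝ) ^ 2 := by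
        gcongr with i
        simpa [latticePoint] using (mem_natCube.1 hm i).le
    _ = d * (n : ℝ) ^ 2 := by simp

lemma card_filter_norm_latticePoint_sub_le (s : Finset (Fin d → ℕ)) (j : Fin d → ℕ) (R : ℕ) :
    #{k ∈ s | ‖latticePoint j - latticePoint k‖ ≤ R} ≤ (2 * R + 1) ^ d := by
  have hsub : {k ∈ s | ‖latticePoint j - latticePoint k‖ ≤ R} ⊆
      Fintype.piFinset fun i => Icc (j i - R) (j i + R) := by
    intro k hk
    refine Fintype.mem_piFinset.2 fun i => ?_
    have hcoord : |(j i : ℝ) - k i| ≤ R := by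
      simpa [latticePoint] using
        (PiLp.norm_apply_le (latticePoint j - latticePoint k) i).trans (mem_filter.1 hk).2
    obtain ⟨hlower, hupper⟩ := abs_le.1 hcoord
    have hk_le : (k i : ℝ) ≤ (j i + R : ℕ) := by push_cast; linarith
    have hj_le : (j i : ℝ) ≤ (k i + R : ℕ) := by push_cast; linarith
    rw [Nat.cast_le] at hk_le hj_le
    rw [mem_Icc]
    omega
  calc #{k ∈ s | ‖latticePoint j - latticePoint k‖ ≤ R}
      ≤ ∏ i, #(Icc (j i - R) (j i + R)) := by
        rw [← Fintype.card_piFinset]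
        exact card_le_card hsub
    _ ≤ (2 * R + 1) ^ #(univ : Finset (Fin d)) := by
        refine prod_le_pow_card _ _ _ fun i _ => ?_
        rw [Nat.card_Icc]
        omega
    _ = (2 * R + 1) ^ d := by rw [card_fin]

lemma exists_mul_invMultiquadric_le (E : Type*) [SeminormedAddCommGroup E] (lam : ℝ)
    (hlt : β₁ < β₂) : ∃ (C : ℝ) (R : ℕ), 0 ≤ C ∧ ∀ z : E,
      lam * invMultiquadric β₂ z ≤ 1 / 2 * invMultiquadric β₁ z + if ‖z‖ ≤ R then C else 0 := by
  have hdecay := (tendsto_rpow_neg_atTop (sub_pos.2 hlt)).const_mul lam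
  rw [mul_zero] at hdecay
  obtain ⟨T, hT⟩ := eventually_atTop.1 (hdecay.eventually_le_const one_half_pos)
  obtain ⟨R, hR⟩ := exists_nat_ge T
  refine ⟨|lam| * (1 + (R : ℝ) ^ 2) ^ |β₂|, R, by positivity, fun z => ?_⟩
  have hone : 1 ≤ 1 + ‖z‖ ^ 2 := le_add_of_nonneg_right (sq_nonneg _)
  have hβ₁ := invMultiquadric_nonneg β₁ z
  split_ifs with hz
  · have hβ₂ : invMultiquadric β₂ z ≤ (1 + (R : ℝ) ^ 2) ^ |β₂| :=
      calc (1 + ‖z‖ ^ 2) ^ (-β₂) ≤ (1 + ‖z‖ ^ 2) ^ |β₂| :=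
            Real.rpow_le_rpow_of_exponent_le hone (neg_le_abs β₂)
        _ ≤ (1 + (R : ℝ) ^ 2) ^ |β₂| := by gcongr
    calc lam * invMultiquadric β₂ z ≤ |lam| * (1 + (R : ℝ) ^ 2) ^ |β₂| :=
          mul_le_mul (le_abs_self lam) hβ₂ (invMultiquadric_nonneg β₂ z) (abs_nonneg lam)
      _ ≤ 1 / 2 * invMultiquadric β₁ z + |lam| * (1 + (R : ℝ) ^ 2) ^ |β₂| := by linarith
  · have hsmall := hT (1 + ‖z‖ ^ 2) (by nlinarith [sq_nonneg (‖z‖ - 1)])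
    calc lam * invMultiquadric β₂ z
        = lam * (1 + ‖z‖ ^ 2) ^ (-(β₂ - β₁)) * invMultiquadric β₁ z := by
          rw [invMultiquadric, invMultiquadric, mul_assoc, ← Real.rpow_add (by positivity)]
          ring_nf
      _ ≤ 1 / 2 * invMultiquadric β₁ z := mul_le_mul_of_nonneg_right hsmall hβ₁
      _ = 1 / 2 * invMultiquadric β₁ z + 0 := (add_zero _).symm

lemma InvMultiquadricDominates.exists_sum_latticePoint_le
    (h : InvMultiquadricDominates (EuclideanSpace ℝ (Fin d)) lam β₁ β₂) (hlt : β₁ < β₂) :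
    ∃ B : ℝ, ∀ s : Finset (Fin d → ℕ),
      ∑ j ∈ s, ∑ k ∈ s, invMultiquadric β₁ (latticePoint j - latticePoint k) ≤ #s * B := by
  obtain ⟨C, R, hC, hbound⟩ :=
    exists_mul_invMultiquadric_le (EuclideanSpace ℝ (Fin d)) lam hlt
  refine ⟨2 * ((2 * R + 1) ^ d * C), fun s => ?_⟩
  have hnear (j : Fin d → ℕ) :
      ∑ k ∈ s, (if ‖latticePoint j - latticePoint k‖ ≤ R then C else 0) ≤ (2 * R + 1) ^ d * C := by
    rw [← sum_filter, sum_const, nsmul_eq_mul]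
    gcongr
    exact_mod_cast card_filter_norm_latticePoint_sub_le s j R
  have hsum := calc
    ∑ j ∈ s, ∑ k ∈ s, invMultiquadric β₁ (latticePoint j - latticePoint k)
      ≤ ∑ j ∈ s, ∑ k ∈ s, lam * invMultiquadric β₂ (latticePoint j - latticePoint k) := by
        simpa only [one_mul, mul_sum] using h.sum_le s latticePoint fun _ => 1
    _ ≤ ∑ j ∈ s, ((∑ k ∈ s, 1 / 2 * invMultiquadric β₁ (latticePoint j - latticePoint k)) +
          ∑ k ∈ s, if ‖latticePoint j - latticePoint k‖ ≤ R then C else 0) := by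
        simp only [← sum_add_distrib]
        exact sum_le_sum fun j _ => sum_le_sum fun k _ => hbound _
    _ ≤ ∑ j ∈ s, ((∑ k ∈ s, 1 / 2 * invMultiquadric β₁ (latticePoint j - latticePoint k)) +
          (2 * R + 1) ^ d * C) := by
        gcongr with j
        exact hnear j
    _ = 1 / 2 * (∑ j ∈ s, ∑ k ∈ s, invMultiquadric β₁ (latticePoint j - latticePoint k)) +
          #s * ((2 * R + 1) ^ d * C) := by
        rw [sum_add_distrib, sum_const, nsmul_eq_mul]
        simp only [← mul_sum]
  linarith

/-- The partial sum over `{0, …, n - 1}^d` of the lattice sum of the inverse multiquadric. -/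
noncomputable def latticeSum (d : ℕ) (β : ℝ) (n : ℕ) : ℝ :=
  ∑ m ∈ natCube d n, invMultiquadric β (latticePoint m)

lemma latticeSum_nonneg (d : ℕ) (β : ℝ) (n : ℕ) : 0 ≤ latticeSum d β n :=
  sum_nonneg fun _ _ => invMultiquadric_nonneg β _

lemma card_mul_latticeSum_le (d : ℕ) (β : ℝ) (n : ℕ) :
    (n : ℝ) ^ d * latticeSum d β n ≤ ∑ j ∈ natCube d (2 * n), ∑ k ∈ natCube d (2 * n),
      invMultiquadric β (latticePoint j - latticePoint k) := by
  have htranslate {k : Fin d → ℕ} (hk : k ∈ natCube d n) :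
      (natCube d n).map (addLeftEmbedding k) ⊆ natCube d (2 * n) := by
    rw [map_subset_iff_subset_preimage]
    intro m hm
    simp only [mem_preimage, addLeftEmbedding_apply, mem_natCube, Pi.add_apply, two_mul]
    exact fun i => add_lt_add (mem_natCube.1 hk i) (mem_natCube.1 hm i)
  rw [sum_comm]
  calc (n : ℝ) ^ d * latticeSum d β n = ∑ _k ∈ natCube d n, latticeSum d β n := by
        simp [card_natCube]
    _ = ∑ k ∈ natCube d n, ∑ j ∈ (natCube d n).map (addLeftEmbedding k),
          invMultiquadric β (latticePoint j - latticePoint k) := by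
        simp only [latticeSum, sum_map, addLeftEmbedding_apply, latticePoint_add_sub_latticePoint]
    _ ≤ ∑ k ∈ natCube d n, ∑ j ∈ natCube d (2 * n),
          invMultiquadric β (latticePoint j - latticePoint k) :=
        sum_le_sum fun k hk => sum_le_sum_of_subset_of_nonneg (htranslate hk)
          fun j _ _ => invMultiquadric_nonneg β _
    _ ≤ ∑ k ∈ natCube d (2 * n), ∑ j ∈ natCube d (2 * n),
          invMultiquadric β (latticePoint j - latticePoint k) :=
        sum_le_sum_of_subset_of_nonneg (natCube_subset_natCube (by omega))
          fun k _ _ => sum_nonneg fun j _ => invMultiquadric_nonneg β _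

lemma rpow_le_invMultiquadric_latticePoint (hd : 0 < d) {β : ℝ} (hβ : β ≤ d / 2) {n : ℕ}
    (hn : 0 < n) {m : Fin d → ℕ} (hm : m ∈ natCube d (2 * n)) :
    (5 * d : ℝ) ^ (-(d / 2 : ℝ)) * ((n : ℝ) ^ d)⁻¹ ≤ invMultiquadric β (latticePoint m) := by
  have hnorm := norm_latticePoint_sq_le hm
  push_cast at hnorm
  have hone : 1 ≤ d * (n : ℝ) ^ 2 := by exact_mod_cast Nat.succ_le_of_lt (by positivity)
  calc (5 * d : ℝ) ^ (-(d / 2 : ℝ)) * ((n : ℝ) ^ d)⁻¹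
      = (5 * d * (n : ℝ) ^ 2) ^ (-(d / 2 : ℝ)) := by
        rw [Real.mul_rpow (y := (n : ℝ) ^ 2) (by positivity) (by positivity),
          ← Real.rpow_natCast_mul (by positivity),
          show ((2 : ℕ) : ℝ) * -(d / 2) = -d by push_cast; ring,
          Real.rpow_neg n.cast_nonneg, Real.rpow_natCast]
    _ ≤ (1 + ‖latticePoint m‖ ^ 2) ^ (-(d / 2 : ℝ)) :=
        Real.rpow_le_rpow_of_nonpos (by positivity) (by linarith) (by linarith)
    _ ≤ (1 + ‖latticePoint m‖ ^ 2) ^ (-β) :=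
        Real.rpow_le_rpow_of_exponent_le (le_add_of_nonneg_right (sq_nonneg _)) (neg_le_neg hβ)

-- Each dyadic shell has about `n ^ d` points, where the summand is at least of order `n ^ (-d)`.
lemma latticeSum_add_le_latticeSum_two_mul (hd : 0 < d) {β : ℝ} (hβ : β ≤ d / 2) {n : ℕ}
    (hn : 0 < n) :
    latticeSum d β n + (5 * d : ℝ) ^ (-(d / 2 : ℝ)) ≤ latticeSum d β (2 * n) := by
  have hsub : natCube d n ⊆ natCube d (2 * n) := natCube_subset_natCube (by omega)
  have hcard : (n : ℝ) ^ d ≤ #(natCube d (2 * n) \ natCube d n) := by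
    rw [card_sdiff_of_subset hsub, card_natCube, card_natCube, mul_pow]
    have hdouble := Nat.mul_le_mul_right (n ^ d) (Nat.le_self_pow hd.ne' 2)
    exact_mod_cast show n ^ d ≤ 2 ^ d * n ^ d - n ^ d by omega
  have hshell := card_nsmul_le_sum (natCube d (2 * n) \ natCube d n) _ _ fun m hm =>
    rpow_le_invMultiquadric_latticePoint hd hβ hn (mem_sdiff.1 hm).1
  rw [latticeSum, latticeSum, ← sum_sdiff hsub, add_comm]
  gcongr
  calc (5 * d : ℝ) ^ (-(d / 2 : ℝ))
      = (n : ℝ) ^ d * ((5 * d : ℝ) ^ (-(d / 2 : ℝ)) * ((n : ℝ) ^ d)⁻¹) := by field_simp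
    _ ≤ #(natCube d (2 * n) \ natCube d n) *
          ((5 * d : ℝ) ^ (-(d / 2 : ℝ)) * ((n : ℝ) ^ d)⁻¹) := by gcongr
    _ ≤ ∑ m ∈ natCube d (2 * n) \ natCube d n, invMultiquadric β (latticePoint m) := by
        rwa [← nsmul_eq_mul]

lemma nsmul_le_latticeSum_two_pow (hd : 0 < d) {β : ℝ} (hβ : β ≤ d / 2) (k : ℕ) :
    k • (5 * d : ℝ) ^ (-(d / 2 : ℝ)) ≤ latticeSum d β (2 ^ k) := by
  induction k with
  | zero => simpa using latticeSum_nonneg d β 1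
  | succ k ih =>
    rw [succ_nsmul, pow_succ']
    exact (add_le_add_left ih _).trans (latticeSum_add_le_latticeSum_two_mul hd hβ (by positivity))

lemma InvMultiquadricDominates.half_lt_of_euclideanSpace
    (h : InvMultiquadricDominates (EuclideanSpace ℝ (Fin d)) lam β₁ β₂) (hd : 0 < d)
    (hlt : β₁ < β₂) : (d : ℝ) / 2 < β₁ := by
  by_contra! hβ
  obtain ⟨B, hB⟩ := h.exists_sum_latticePoint_le hlt
  have hbounded {n : ℕ} (hn : 0 < n) : latticeSum d β₁ n ≤ 2 ^ d * B := by
    have hle := (card_mul_latticeSum_le d β₁ n).trans (hB (natCube d (2 * n)))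
    rw [card_natCube, Nat.cast_pow, Nat.cast_mul, Nat.cast_two, mul_pow, mul_right_comm,
      mul_comm] at hle
    exact le_of_mul_le_mul_right hle (by positivity)
  have hstep : 0 < (5 * d : ℝ) ^ (-(d / 2 : ℝ)) := by positivity
  obtain ⟨k, hk⟩ := exists_lt_nsmul hstep (2 ^ d * B)
  exact ((hk.trans_le (nsmul_le_latticeSum_two_pow hd hβ k)).trans_le
    (hbounded (by positivity))).false

end LatticePoints

section Characterization

variable {E : Type*} [NormedAddCommGroup E] [InnerProductSpace ℝ E] {lam β₁ β₂ : ℝ}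

lemma InvMultiquadricDominates.comp_linearIsometry {F : Type*} [NormedAddCommGroup F]
    [InnerProductSpace ℝ F] (h : InvMultiquadricDominates E lam β₁ β₂) (f : F →ₗᵢ[ℝ] E) :
    InvMultiquadricDominates F lam β₁ β₂ := by
  intro n x c
  simpa only [Function.comp_apply, invMultiquadric, ← map_sub, f.norm_map] using h n (f ∘ x) c

lemma InvMultiquadricDominates.half_lt [FiniteDimensional ℝ E] [Nontrivial E]
    (h : InvMultiquadricDominates E lam β₁ β₂) (hlt : β₁ < β₂) :
    (Module.finrank ℝ E : ℝ) / 2 < β₁ :=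
  (h.comp_linearIsometry (stdOrthonormalBasis ℝ E).repr.symm.toLinearIsometry
    ).half_lt_of_euclideanSpace Module.finrank_pos hlt

lemma invMultiquadricDominates_one_self (E : Type*) [SeminormedAddCommGroup E] (β : ℝ) :
    InvMultiquadricDominates E 1 β β := by
  simp [InvMultiquadricDominates, IsPSDKernel]

theorem invMultiquadric_inclusion_iff_general (E : Type*) [NormedAddCommGroup E]
    [InnerProductSpace ℝ E] [FiniteDimensional ℝ E] [Nontrivial E] (β₁ β₂ : ℝ) :
    (∃ lam : ℝ, 0 ≤ lam ∧ InvMultiquadricDominates E lam β₁ β₂) ↔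
      β₁ = β₂ ∨ ((Module.finrank ℝ E : ℝ) / 2 < β₁ ∧ β₁ < β₂) := by
  constructor
  · rintro ⟨lam, -, h⟩
    exact h.le.eq_or_lt.imp_right fun hlt => ⟨h.half_lt hlt, hlt⟩
  · rintro (rfl | ⟨hβ₁, hlt⟩)
    · exact ⟨1, zero_le_one, invMultiquadricDominates_one_self E β₁⟩
    · exact exists_invMultiquadricDominates hβ₁ hlt

end Characterization

/-- For distinct `β₁, β₂ > 0`, some `λ ≥ 0` makes `λM_{β₂} − M_{β₁}` a positive
semidefinite kernel on `ℝ^d` iff `d/2 < β₁ < β₂`. -/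
theorem invMultiquadric_inclusion_iff (d : ℕ) (hd : 0 < d)
    (β₁ β₂ : ℝ) (hβ₁ : 0 < β₁) (hβ₂ : 0 < β₂) (hne : β₁ ≠ β₂) :
    (∃ lam : ℝ, 0 ≤ lam ∧
        IsPSDKernel (fun x y : EuclideanSpace ℝ (Fin d) =>
          (lam : ℂ) * invMultiquadricK d β₂ x y - invMultiquadricK d β₁ x y)) ↔
      ((d : ℝ) / 2 < β₁ ∧ β₁ < β₂) := by
  have := Fin.pos_iff_nonempty.1 hd
  simpa [hne, ofReal_mul_invMultiquadricK_sub, InvMultiquadricDominates] using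
    invMultiquadric_inclusion_iff_general (EuclideanSpace ℝ (Fin d)) β₁ β₂
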